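/- Let K be any field, and let G_45 ⊆ S_8 be the subgroup of order 576 generated by (1,3)(2,4), (2,3,4), (1,2)(5,6), and κ = (1,5)(2,6)(3,7)(4,8). Then the fixed field K(x_1,…,x_8)^{G_45} is K-rational. -/

import Mathlib

noncomputable section

/-- The rational function field `K(x_i : i ∈ I)` over `K`, realized as the fraction field
of the multivariate polynomial ring. -/
abbrev RFF (K : Type) [Field K] (I : Type) := FractionRing (MvPolynomial I K)

/-- The image of the variable `x_i` in the rational function field `K(x_i : i ∈ I)`. -/
noncomputable def Xvar (K : Type) [Field K] (I : Type) (i : I) : RFF K I :=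
  algebraMap (MvPolynomial I K) (RFF K I) (MvPolynomial.X i)

/-- Permutations of the variables as `K`-algebra automorphisms of the polynomial ring. -/
def renameHom (K : Type) [Field K] (I : Type) :
    Equiv.Perm I →* (MvPolynomial I K ≃ₐ[K] MvPolynomial I K) where
  toFun σ := MvPolynomial.renameEquiv K σ
  map_one' := MvPolynomial.renameEquiv_refl K
  map_mul' σ τ := (MvPolynomial.renameEquiv_trans K τ σ).symm

/-- The action of permutations of the variables on `K(x_i : i ∈ I)` by `K`-automorphisms,
determined by `σ(x_i) = x_{σ(i)}`. -/
noncomputable def permHom (K : Type) [Field K] (I : Type) :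
    Equiv.Perm I →* (RFF K I ≃ₐ[K] RFF K I) :=
  (IsFractionRing.fieldEquivOfAlgEquivHom K (RFF K I)).comp (renameHom K I)

/-- The fixed field `K(x_i : i ∈ I)^G` of a group `G` of permutations of the variables. -/
noncomputable def fixedSub (K : Type) [Field K] (I : Type) (G : Subgroup (Equiv.Perm I)) :
    IntermediateField K (RFF K I) :=
  IntermediateField.fixedField (G.map (permHom K I))

/-- An extension `L/K` is `K`-rational if it is purely transcendental over `K`, i.e. generated
by finitely many algebraically independent elements. -/
def IsRatExt (K : Type) [Field K] (L : Type*) [Field L] [Algebra K L] : Prop :=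
  ∃ (n : ℕ) (t : Fin n → L), AlgebraicIndependent K t ∧
    IntermediateField.adjoin K (Set.range t) = ⊤

/-!
`G₄₅` contains `A₄ × A₄`, acting on two blocks of four variables, with a Klein four-group as
quotient. The sum and the three Klein ratios `(ab - cd) / (a + b - c - d)` of a block determine its
elementary symmetric functions, so adjoining one variable of the block to the field they generate
is an extension of degree at most `4`, and this already yields the whole block. The `3`-cycles
permute the ratios, and Masuda's invariants of three cyclically permuted elements cost a further
degree `3`. What remains of a block are `y₀, y₁`, fixed by `S₄`, and `y₂, y₃`, interchanged by odd
permutations; call `z` the same for the other block. The quotient acts regularly on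
`y₂, y₃, z₂, z₃`, so Klein invariants are used once more, while for `i = 0, 1` the pair `yᵢ, zᵢ` is
replaced, without change of degree, by `yᵢ + zᵢ` and `(y₂ + y₃) yᵢ + (z₂ + z₃) zᵢ`.

Thus `K(x₁, …, x₈)` has degree at most `4 · (4 · 3)² = 576 ≤ |G₄₅|` over the field generated by the
eight resulting invariants, which is therefore the whole fixed field; and eight elements over which
`K(x₁, …, x₈)` is finite are algebraically independent. All formulas have integral coefficients and
divide only by expressions that are nonzero whatever the characteristic.
-/

open IntermediateField Polynomial

section BoundedDegree

/-- The family `t` is a transcendence basis of `L / K` with `[L : K(t)] ≤ d`. -/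
structure IsTranscendenceBasisOfDegreeLE (K : Type*) {L ι : Type*} [Field K] [Field L]
    [Algebra K L] (t : ι → L) (d : ℕ) : Prop where
  algebraicIndependent : AlgebraicIndependent K t
  finiteDimensional : FiniteDimensional (adjoin K (Set.range t)) L
  finrank_le : Module.finrank (adjoin K (Set.range t)) L ≤ d

variable {K L ι : Type*} [Field K] [Field L] [Algebra K L]

open scoped IntermediateField.algebraAdjoinAdjoin in
lemma isAlgebraic_algebraAdjoin_of_isAlgebraic_adjoin {S : Set L}
    [Algebra.IsAlgebraic (adjoin K S) L] : Algebra.IsAlgebraic (Algebra.adjoin K S) L :=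
  (IsFractionRing.comap_isAlgebraic_iff (A := Algebra.adjoin K S) (K := adjoin K S)).2 ‹_›

namespace IsTranscendenceBasisOfDegreeLE

variable {t t' : ι → L} {d : ℕ}

lemma finiteDimensional_and_finrank_le_of_mem (h : IsTranscendenceBasisOfDegreeLE K t d)
    {F : IntermediateField K L} (ht : ∀ i, t i ∈ F) :
    FiniteDimensional F L ∧ Module.finrank F L ≤ d := by
  have hdvd : Module.finrank F L ∣ Module.finrank (adjoin K (Set.range t)) L :=
    finrank_dvd_of_le_left (adjoin_le_iff.2 (Set.range_subset_iff.2 ht))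
  have := h.finiteDimensional
  exact ⟨Module.finite_of_finrank_pos (Nat.pos_of_dvd_of_pos hdvd Module.finrank_pos),
    (Nat.le_of_dvd Module.finrank_pos hdvd).trans h.finrank_le⟩

variable [Finite ι]

lemma algebraicIndependent_of_finiteDimensional (h : IsTranscendenceBasisOfDegreeLE K t d)
    [FiniteDimensional (adjoin K (Set.range t')) L] : AlgebraicIndependent K t' := by
  have := isAlgebraic_algebraAdjoin_of_isAlgebraic_adjoin (K := K) (S := Set.range t')
  exact (Algebra.IsAlgebraic.isTranscendenceBasis_of_lift_le_trdeg_of_finite K t'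
    h.algebraicIndependent.lift_cardinalMk_le_trdeg).1

lemma of_mem_adjoin_root (h : IsTranscendenceBasisOfDegreeLE K t d) {y : L}
    {f : (adjoin K (Set.range t'))[X]} (hf : f.Monic) (hy : aeval y f = 0)
    (ht : ∀ i, t i ∈ (adjoin K (Set.range t'))⟮y⟯) :
    IsTranscendenceBasisOfDegreeLE K t' (f.natDegree * d) := by
  let F := adjoin K (Set.range t')
  have hint : IsIntegral F y := ⟨f, hf, hy⟩
  obtain ⟨hfin, hle⟩ := h.finiteDimensional_and_finrank_le_of_mem
    (F := F⟮y⟯.restrictScalars K) ht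
  have : FiniteDimensional F F⟮y⟯ := adjoin.finiteDimensional hint
  have : FiniteDimensional F⟮y⟯ L := hfin
  have : FiniteDimensional F L := Module.Finite.trans F⟮y⟯ L
  refine ⟨h.algebraicIndependent_of_finiteDimensional, this, ?_⟩
  rw [← Module.finrank_mul_finrank F F⟮y⟯ L, adjoin.finrank hint]
  exact Nat.mul_le_mul (natDegree_le_of_dvd (minpoly.dvd F y hy) hf.ne_zero) hle

lemma of_mem_adjoin (h : IsTranscendenceBasisOfDegreeLE K t d)
    (ht : ∀ i, t i ∈ adjoin K (Set.range t')) : IsTranscendenceBasisOfDegreeLE K t' d := by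
  simpa using h.of_mem_adjoin_root (y := 0) monic_X (by simp)
    fun i ↦ IntermediateField.algebraMap_mem _ (⟨t i, ht i⟩ : adjoin K (Set.range t'))

lemma of_replace_root {κ : Type*} {p : κ → ι} (h : IsTranscendenceBasisOfDegreeLE K t d)
    (hoff : ∀ i ∉ Set.range p, t' i = t i) {y : L} {f : (adjoin K (Set.range t'))[X]}
    (hf : f.Monic) (hy : aeval y f = 0) (ht : ∀ j, t (p j) ∈ (adjoin K (Set.range t'))⟮y⟯) :
    IsTranscendenceBasisOfDegreeLE K t' (f.natDegree * d) := by
  refine h.of_mem_adjoin_root hf hy fun i ↦ ?_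
  by_cases hi : i ∈ Set.range p
  · obtain ⟨j, rfl⟩ := hi
    exact ht j
  · rw [← hoff i hi]
    exact IntermediateField.algebraMap_mem _
      (⟨t' i, subset_adjoin K _ ⟨i, rfl⟩⟩ : adjoin K (Set.range t'))

lemma of_replace_linear {κ : Type*} {i j : κ → ι} {α β : L}
    (h : IsTranscendenceBasisOfDegreeLE K t d)
    (hoff : ∀ l ∉ Set.range i ∪ Set.range j, t' l = t l)
    (hi : ∀ k, t' (i k) = t (i k) + t (j k)) (hj : ∀ k, t' (j k) = α * t (i k) + β * t (j k))
    (hα : α ∈ adjoin K (Set.range t')) (hβ : β ∈ adjoin K (Set.range t')) (hαβ : α ≠ β) :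
    IsTranscendenceBasisOfDegreeLE K t' d := by
  have ht' (l : ι) : t' l ∈ adjoin K (Set.range t') := subset_adjoin K _ ⟨l, rfl⟩
  have hti (k : κ) : t (i k) ∈ adjoin K (Set.range t') := by
    have : t (i k) = (t' (j k) - β * t' (i k)) / (α - β) := by
      rw [eq_div_iff (sub_ne_zero.2 hαβ), hi, hj]
      ring
    rw [this]
    exact div_mem (sub_mem (ht' _) (mul_mem hβ (ht' _))) (sub_mem hα hβ)
  refine h.of_mem_adjoin fun l ↦ ?_
  by_cases hl : l ∈ Set.range i ∪ Set.range j
  · obtain ⟨k, rfl⟩ | ⟨k, rfl⟩ := hl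
    · exact hti k
    · rw [← add_sub_cancel_left (t (i k)) (t (j k)), ← hi]
      exact sub_mem (ht' _) (hti k)
  · rw [← hoff l hl]
    exact ht' l

end IsTranscendenceBasisOfDegreeLE

end BoundedDegree

section AlgebraicIndependence

variable {R A ι : Type*} [CommRing R] [CommRing A] [Algebra R A] {q : ι → A}

lemma aeval_ne_of_eval_ne (hq : AlgebraicIndependent R q) {f g : MvPolynomial ι R} {x : ι → R}
    (hx : MvPolynomial.eval x f ≠ MvPolynomial.eval x g) :
    MvPolynomial.aeval q f ≠ MvPolynomial.aeval q g :=
  fun hfg ↦ hx (congrArg (MvPolynomial.eval x) (hq hfg))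

lemma add_ne_add_of_algebraicIndependent [Nontrivial R]
    (hq : AlgebraicIndependent R q) {i j k l : ι} (hij : i ≠ j) (hik : i ≠ k) (hil : i ≠ l) :
    q i + q j ≠ q k + q l := by
  classical
  simpa using aeval_ne_of_eval_ne hq (f := .X i + .X j) (g := .X k + .X l) (x := Pi.single i 1)
    (by simp [hij, hik, hil])

end AlgebraicIndependence

section Klein

variable {L : Type*} [Field L]

/-- The ratio `(ab - cd) / (a + b - c - d)`. It is invariant under the Klein four-group acting
regularly on `a, b, c, d`. -/
def kleinRatio (a b c d : L) : L :=
  (a * b - c * d) / (a + b - c - d)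

lemma kleinRatio_swap_left (a b c d : L) : kleinRatio b a c d = kleinRatio a b c d := by
  rw [kleinRatio, kleinRatio, mul_comm b, add_comm b]

lemma kleinRatio_swap_right (a b c d : L) : kleinRatio a b d c = kleinRatio a b c d := by
  rw [kleinRatio, kleinRatio, mul_comm d, sub_right_comm]

lemma kleinRatio_swap_pairs (a b c d : L) : kleinRatio c d a b = kleinRatio a b c d := by
  rw [kleinRatio, kleinRatio, ← neg_div_neg_eq]
  congr 1 <;> ring

lemma map_kleinRatio {M F : Type*} [Field M] [FunLike F L M] [RingHomClass F L M] (f : F)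
    (a b c d : L) : f (kleinRatio a b c d) = kleinRatio (f a) (f b) (f c) (f d) := by
  simp [kleinRatio]

lemma mul_add_mul_eq_of_kleinRatio {a b c d : L} (h₁ : a + b ≠ c + d) (h₂ : a + c ≠ b + d)
    (h₃ : a + d ≠ b + c) :
    a * b + c * d = (a + b + c + d) * kleinRatio a b c d
      - 2 * kleinRatio a b c d * (kleinRatio a c b d + kleinRatio a d b c)
      + 2 * kleinRatio a c b d * kleinRatio a d b c := by
  rw [← sub_ne_zero, ← sub_sub] at h₁ h₂ h₃
  unfold kleinRatio
  field_simp
  ring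

lemma esymm_two_eq_of_kleinRatio {a b c d : L} (h₁ : a + b ≠ c + d) (h₂ : a + c ≠ b + d)
    (h₃ : a + d ≠ b + c) :
    a * b + a * c + a * d + b * c + b * d + c * d =
      (a + b + c + d) * (kleinRatio a b c d + kleinRatio a c b d + kleinRatio a d b c)
      - 2 * (kleinRatio a b c d * kleinRatio a c b d + kleinRatio a b c d * kleinRatio a d b c
        + kleinRatio a c b d * kleinRatio a d b c) := by
  have h₁₂ := mul_add_mul_eq_of_kleinRatio h₁ h₂ h₃
  have h₁₃ := mul_add_mul_eq_of_kleinRatio h₂ h₁ (add_comm b c ▸ h₃)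
  have h₁₄ := mul_add_mul_eq_of_kleinRatio h₃ (add_comm c d ▸ h₁) (add_comm b d ▸ h₂)
  rw [kleinRatio_swap_right a d] at h₁₃
  rw [kleinRatio_swap_right a b, kleinRatio_swap_right a c] at h₁₄
  linear_combination h₁₂ + h₁₃ + h₁₄

lemma esymm_three_eq_of_kleinRatio {a b c d : L} (h₁ : a + b ≠ c + d) (h₂ : a + c ≠ b + d)
    (h₃ : a + d ≠ b + c) :
    a * b * c + a * b * d + a * c * d + b * c * d =
      (a + b + c + d) * (kleinRatio a b c d * kleinRatio a c b d
        + kleinRatio a b c d * kleinRatio a d b c + kleinRatio a c b d * kleinRatio a d b c)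
      - 8 * (kleinRatio a b c d * kleinRatio a c b d * kleinRatio a d b c) := by
  rw [← sub_ne_zero, ← sub_sub] at h₁ h₂ h₃
  unfold kleinRatio
  field_simp
  ring

lemma esymm_four_eq_of_kleinRatio {a b c d : L} (h₁ : a + b ≠ c + d) (h₂ : a + c ≠ b + d)
    (h₃ : a + d ≠ b + c) :
    a * b * c * d =
      (a + b + c + d) * (kleinRatio a b c d * kleinRatio a c b d * kleinRatio a d b c)
      - 4 * (kleinRatio a b c d + kleinRatio a c b d + kleinRatio a d b c)
        * (kleinRatio a b c d * kleinRatio a c b d * kleinRatio a d b c)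
      + (kleinRatio a b c d * kleinRatio a c b d + kleinRatio a b c d * kleinRatio a d b c
        + kleinRatio a c b d * kleinRatio a d b c) ^ 2 := by
  rw [← sub_ne_zero, ← sub_sub] at h₁ h₂ h₃
  unfold kleinRatio
  field_simp
  ring

lemma mem_of_kleinRatio_mem {S : Type*} [SetLike S L] [SubfieldClass S L] {E : S} {a b c d : L}
    (h₁ : a + b ≠ c + d) (h₂ : a + c ≠ b + d) (h₃ : a + d ≠ b + c) (hac : a ≠ c) (had : a ≠ d)
    (ha : a ∈ E) (hs : a + b + c + d ∈ E) (hr₁ : kleinRatio a b c d ∈ E)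
    (hr₂ : kleinRatio a c b d ∈ E) (hr₃ : kleinRatio a d b c ∈ E) : b ∈ E := by
  -- The numerator is `(a - c) * (a - d) * b` in terms of `a`, the elementary symmetric functions
  -- and the root `a * b + c * d` of the cubic resolvent.
  have hb : b = ((a * b * c + a * b * d + a * c * d + b * c * d)
      - 2 * a * (a * b + a * c + a * d + b * c + b * d + c * d)
      + 2 * a ^ 2 * (a + b + c + d) - 2 * a ^ 3 + a * (a * b + c * d))
      / (2 * a ^ 2 - a * (a + b + c + d) + (a * b + c * d)) := by
    have hden : 2 * a ^ 2 - a * (a + b + c + d) + (a * b + c * d) = (a - c) * (a - d) := by ring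
    rw [hden, eq_div_iff (mul_ne_zero (sub_ne_zero.2 hac) (sub_ne_zero.2 had))]
    ring
  have hT : a * b + c * d ∈ E := by
    rw [mul_add_mul_eq_of_kleinRatio h₁ h₂ h₃]
    apply_rules [add_mem, sub_mem, mul_mem, ofNat_mem]
  have he₂ : a * b + a * c + a * d + b * c + b * d + c * d ∈ E := by
    rw [esymm_two_eq_of_kleinRatio h₁ h₂ h₃]
    apply_rules [add_mem, sub_mem, mul_mem, ofNat_mem]
  have he₃ : a * b * c + a * b * d + a * c * d + b * c * d ∈ E := by
    rw [esymm_three_eq_of_kleinRatio h₁ h₂ h₃]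
    apply_rules [add_mem, sub_mem, mul_mem, ofNat_mem]
  rw [hb]
  refine div_mem (add_mem (sub_mem (add_mem (sub_mem he₃ ?_) ?_) ?_) (mul_mem ha hT))
    (add_mem (sub_mem ?_ (mul_mem ha hs)) hT)
  all_goals apply_rules [mul_mem, pow_mem, ofNat_mem]

/-- The sum and the three Klein ratios of four elements, which generate the fixed field of the
Klein four-group acting regularly on four variables. -/
def kleinInvariants (q : Fin 4 → L) : Fin 4 → L :=
  ![q 0 + q 1 + q 2 + q 3, kleinRatio (q 0) (q 1) (q 2) (q 3), kleinRatio (q 0) (q 2) (q 1) (q 3),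
    kleinRatio (q 0) (q 3) (q 1) (q 2)]

lemma comp_kleinInvariants {M F : Type*} [Field M] [FunLike F L M] [RingHomClass F L M] (f : F)
    (q : Fin 4 → L) : f ∘ kleinInvariants q = kleinInvariants (f ∘ q) := by
  funext i
  fin_cases i <;> simp [kleinInvariants, map_kleinRatio]

lemma kleinInvariants_comp_swap_swap (q : Fin 4 → L) :
    kleinInvariants (q ∘ ![1, 0, 3, 2]) = kleinInvariants q := by
  funext i
  fin_cases i
  · change q 1 + q 0 + q 3 + q 2 = q 0 + q 1 + q 2 + q 3
    ring
  · change kleinRatio (q 1) (q 0) (q 3) (q 2) = kleinRatio (q 0) (q 1) (q 2) (q 3)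
    rw [kleinRatio_swap_left, kleinRatio_swap_right]
  · exact kleinRatio_swap_pairs _ _ _ _
  · change kleinRatio (q 1) (q 2) (q 0) (q 3) = kleinRatio (q 0) (q 3) (q 1) (q 2)
    rw [kleinRatio_swap_pairs, kleinRatio_swap_left, kleinRatio_swap_right]

lemma kleinInvariants_comp_swap_pairs (q : Fin 4 → L) :
    kleinInvariants (q ∘ ![2, 3, 0, 1]) = kleinInvariants q := by
  funext i
  fin_cases i
  · change q 2 + q 3 + q 0 + q 1 = q 0 + q 1 + q 2 + q 3
    ring
  · exact kleinRatio_swap_pairs _ _ _ _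
  · change kleinRatio (q 2) (q 0) (q 3) (q 1) = kleinRatio (q 0) (q 2) (q 1) (q 3)
    rw [kleinRatio_swap_left, kleinRatio_swap_right]
  · change kleinRatio (q 2) (q 1) (q 3) (q 0) = kleinRatio (q 0) (q 3) (q 1) (q 2)
    rw [kleinRatio_swap_pairs, kleinRatio_swap_left, kleinRatio_swap_right]

lemma kleinInvariants_comp_rotate (q : Fin 4 → L) :
    kleinInvariants (q ∘ ![0, 2, 3, 1]) =
      kleinInvariants q ∘ ![0, 2, 3, 1] := by
  funext i
  fin_cases i
  · change q 0 + q 2 + q 3 + q 1 = q 0 + q 1 + q 2 + q 3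
    ring
  · exact kleinRatio_swap_right _ _ _ _
  · exact kleinRatio_swap_right _ _ _ _
  · rfl

lemma kleinInvariants_comp_swap (q : Fin 4 → L) :
    kleinInvariants (q ∘ ![1, 0, 2, 3]) = kleinInvariants q ∘ ![0, 1, 3, 2] := by
  funext i
  fin_cases i
  · change q 1 + q 0 + q 2 + q 3 = q 0 + q 1 + q 2 + q 3
    ring
  · exact kleinRatio_swap_left _ _ _ _
  · exact kleinRatio_swap_pairs _ _ _ _
  · exact kleinRatio_swap_pairs _ _ _ _

lemma mem_of_kleinInvariants_mem {S : Type*} [SetLike S L] [SubfieldClass S L] {E : S}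
    {q : Fin 4 → L} (hq : Function.Injective q) (h₁ : q 0 + q 1 ≠ q 2 + q 3)
    (h₂ : q 0 + q 2 ≠ q 1 + q 3) (h₃ : q 0 + q 3 ≠ q 1 + q 2) (h₀ : q 0 ∈ E)
    (hw : ∀ i, kleinInvariants q i ∈ E) (i : Fin 4) : q i ∈ E := by
  have hs : q 0 + q 1 + q 2 + q 3 ∈ E := hw 0
  have hr₁ : kleinRatio (q 0) (q 1) (q 2) (q 3) ∈ E := hw 1
  have hr₂ : kleinRatio (q 0) (q 2) (q 1) (q 3) ∈ E := hw 2
  have hr₃ : kleinRatio (q 0) (q 3) (q 1) (q 2) ∈ E := hw 3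
  have hne {i j : Fin 4} (hij : i ≠ j) : q i ≠ q j := hq.ne hij
  have m₁ : q 1 ∈ E :=
    mem_of_kleinRatio_mem h₁ h₂ h₃ (hne (by decide)) (hne (by decide)) h₀ hs hr₁ hr₂ hr₃
  have m₂ : q 2 ∈ E := by
    refine mem_of_kleinRatio_mem h₂ h₁ (add_comm (q 1) _ ▸ h₃) (hne (by decide))
      (hne (by decide)) h₀ ?_ hr₂ hr₁ ?_
    · rwa [add_right_comm (q 0)]
    · rwa [kleinRatio_swap_right]
  have m₃ : q 3 ∈ E := by
    refine mem_of_kleinRatio_mem h₃ (add_comm (q 2) _ ▸ h₁) (add_comm (q 1) _ ▸ h₂)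
      (hne (by decide)) (hne (by decide)) h₀ ?_ hr₃ ?_ ?_
    · rwa [add_right_comm (q 0), add_right_comm (q 0 + q 1)]
    · rwa [kleinRatio_swap_right]
    · rwa [kleinRatio_swap_right]
  fin_cases i
  exacts [h₀, m₁, m₂, m₃]

/-- The quartic whose roots are four elements with the prescribed Klein invariants `w`. -/
def kleinQuartic {R : Type*} [CommRing R] (w : Fin 4 → R) : R[X] :=
  X ^ 4 - C (w 0) * X ^ 3
    + C (w 0 * (w 1 + w 2 + w 3) - 2 * (w 1 * w 2 + w 1 * w 3 + w 2 * w 3)) * X ^ 2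
    - C (w 0 * (w 1 * w 2 + w 1 * w 3 + w 2 * w 3) - 8 * (w 1 * w 2 * w 3)) * X
    + C (w 0 * (w 1 * w 2 * w 3) - 4 * (w 1 + w 2 + w 3) * (w 1 * w 2 * w 3)
      + (w 1 * w 2 + w 1 * w 3 + w 2 * w 3) ^ 2)

lemma monic_kleinQuartic {R : Type*} [CommRing R] (w : Fin 4 → R) : (kleinQuartic w).Monic := by
  nontriviality R
  unfold kleinQuartic
  monicity!

lemma natDegree_kleinQuartic {R : Type*} [CommRing R] [Nontrivial R] (w : Fin 4 → R) :
    (kleinQuartic w).natDegree = 4 := by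
  unfold kleinQuartic
  compute_degree!

lemma map_kleinQuartic {R R' : Type*} [CommRing R] [CommRing R'] (f : R →+* R') (w : Fin 4 → R) :
    (kleinQuartic w).map f = kleinQuartic (f ∘ w) := by
  simp [kleinQuartic, map_ofNat f]

lemma kleinQuartic_kleinInvariants {q : Fin 4 → L} (h₁ : q 0 + q 1 ≠ q 2 + q 3)
    (h₂ : q 0 + q 2 ≠ q 1 + q 3) (h₃ : q 0 + q 3 ≠ q 1 + q 2) :
    kleinQuartic (kleinInvariants q) = ∏ i, (X - C (q i)) := by
  simp only [kleinQuartic, kleinInvariants, Matrix.cons_val]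
  rw [← esymm_two_eq_of_kleinRatio h₁ h₂ h₃, ← esymm_three_eq_of_kleinRatio h₁ h₂ h₃,
    ← esymm_four_eq_of_kleinRatio h₁ h₂ h₃, Fin.prod_univ_four]
  simp only [map_add, map_mul]
  ring

theorem IsTranscendenceBasisOfDegreeLE.of_kleinInvariants {K ι : Type*} [Field K]
    [Algebra K L] [Finite ι] {t t' : ι → L} {d : ℕ} (h : IsTranscendenceBasisOfDegreeLE K t d)
    {p : Fin 4 → ι} (hp : Function.Injective p) (hoff : ∀ i ∉ Set.range p, t' i = t i)
    (ht' : t' ∘ p = kleinInvariants (t ∘ p)) :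
    IsTranscendenceBasisOfDegreeLE K t' (4 * d) := by
  have hq : AlgebraicIndependent K (t ∘ p) := h.algebraicIndependent.comp p hp
  have h₁ : (t ∘ p) 0 + (t ∘ p) 1 ≠ (t ∘ p) 2 + (t ∘ p) 3 :=
    add_ne_add_of_algebraicIndependent hq (by decide) (by decide) (by decide)
  have h₂ : (t ∘ p) 0 + (t ∘ p) 2 ≠ (t ∘ p) 1 + (t ∘ p) 3 :=
    add_ne_add_of_algebraicIndependent hq (by decide) (by decide) (by decide)
  have h₃ : (t ∘ p) 0 + (t ∘ p) 3 ≠ (t ∘ p) 1 + (t ∘ p) 2 :=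
    add_ne_add_of_algebraicIndependent hq (by decide) (by decide) (by decide)
  let w (i : Fin 4) : adjoin K (Set.range t') := ⟨t' (p i), subset_adjoin K _ ⟨p i, rfl⟩⟩
  have hw : algebraMap (adjoin K (Set.range t')) L ∘ w = kleinInvariants (t ∘ p) := ht'
  have hroot : aeval (t (p 0)) (kleinQuartic w) = 0 := by
    rw [aeval_def, ← eval_map, map_kleinQuartic, hw, kleinQuartic_kleinInvariants h₁ h₂ h₃]
    simp [Fin.prod_univ_four]
  have hmem (i : Fin 4) : kleinInvariants (t ∘ p) i ∈ (adjoin K (Set.range t'))⟮t (p 0)⟯ :=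
    hw ▸ IntermediateField.algebraMap_mem _ (w i)
  rw [← natDegree_kleinQuartic w]
  exact h.of_replace_root hoff (monic_kleinQuartic w) hroot <|
    mem_of_kleinInvariants_mem hq.injective h₁ h₂ h₃ (mem_adjoin_simple_self _ _) hmem

end Klein

section Masuda

variable {L : Type*} [Field L]

/-- The common denominator of the two Masuda ratios of `a, b, c`, a quadratic symmetric
polynomial. -/
def masudaDenominator (a b c : L) : L :=
  a ^ 2 + b ^ 2 + c ^ 2 - a * b - b * c - c * a

/-- Masuda's invariant of the cyclic permutations of `a, b, c`. -/
def masudaRatio (a b c : L) : L :=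
  (a ^ 2 * b + b ^ 2 * c + c ^ 2 * a - 3 * a * b * c) / masudaDenominator a b c

lemma masudaDenominator_rotate (a b c : L) :
    masudaDenominator b c a = masudaDenominator a b c := by
  unfold masudaDenominator
  ring

lemma masudaDenominator_swap (a b c : L) :
    masudaDenominator b a c = masudaDenominator a b c := by
  unfold masudaDenominator
  ring

lemma masudaRatio_rotate (a b c : L) : masudaRatio b c a = masudaRatio a b c := by
  rw [masudaRatio, masudaRatio, masudaDenominator_rotate]
  congr 1
  ring

lemma map_masudaRatio {M F : Type*} [Field M] [FunLike F L M] [RingHomClass F L M] (f : F)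
    (a b c : L) : f (masudaRatio a b c) = masudaRatio (f a) (f b) (f c) := by
  simp [masudaRatio, masudaDenominator, map_ofNat f]

lemma masudaRatio_mul_masudaDenominator {a b c : L} (h : masudaDenominator a b c ≠ 0) :
    masudaRatio a b c * masudaDenominator a b c =
      a ^ 2 * b + b ^ 2 * c + c ^ 2 * a - 3 * a * b * c :=
  div_mul_cancel₀ _ h

lemma masudaRatio_swap_mul_masudaDenominator {a b c : L} (h : masudaDenominator a b c ≠ 0) :
    masudaRatio b a c * masudaDenominator a b c =
      b ^ 2 * a + a ^ 2 * c + c ^ 2 * b - 3 * a * b * c := by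
  rw [← masudaDenominator_swap] at h ⊢
  rw [masudaRatio_mul_masudaDenominator h]
  ring

lemma esymm_two_eq_of_masudaRatio {a b c : L} (h : masudaDenominator a b c ≠ 0) :
    a * b + a * c + b * c = (a + b + c) * (masudaRatio a b c + masudaRatio b a c)
      - 3 * (masudaRatio a b c ^ 2 - masudaRatio a b c * masudaRatio b a c
        + masudaRatio b a c ^ 2) := by
  have hu := masudaRatio_mul_masudaDenominator h
  have hv := masudaRatio_swap_mul_masudaDenominator h
  apply mul_left_cancel₀ (pow_ne_zero 2 h)
  generalize hD : masudaDenominator a b c = D at *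
  generalize masudaRatio a b c = u at *
  generalize masudaRatio b a c = v at *
  calc D ^ 2 * (a * b + a * c + b * c)
      = D * (a + b + c) * (u * D + v * D)
        - 3 * ((u * D) ^ 2 - (u * D) * (v * D) + (v * D) ^ 2) := by
        rw [hu, hv, ← hD, masudaDenominator]
        ring
    _ = D ^ 2 * ((a + b + c) * (u + v) - 3 * (u ^ 2 - u * v + v ^ 2)) := by ring

lemma esymm_three_eq_of_masudaRatio {a b c : L} (h : masudaDenominator a b c ≠ 0) :
    a * b * c = (a + b + c) * masudaRatio a b c * masudaRatio b a c
      - masudaRatio a b c ^ 3 - masudaRatio b a c ^ 3 := by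
  have hu := masudaRatio_mul_masudaDenominator h
  have hv := masudaRatio_swap_mul_masudaDenominator h
  apply mul_left_cancel₀ (pow_ne_zero 3 h)
  generalize hD : masudaDenominator a b c = D at *
  generalize masudaRatio a b c = u at *
  generalize masudaRatio b a c = v at *
  calc D ^ 3 * (a * b * c)
      = D * (a + b + c) * (u * D) * (v * D) - (u * D) ^ 3 - (v * D) ^ 3 := by
        rw [hu, hv, ← hD, masudaDenominator]
        ring
    _ = D ^ 3 * ((a + b + c) * u * v - u ^ 3 - v ^ 3) := by ring

lemma mem_of_masudaRatio_mem {S : Type*} [SetLike S L] [SubfieldClass S L] {E : S} {a b c : L}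
    (h : masudaDenominator a b c ≠ 0) (hab : a ≠ b) (hac : a ≠ c) (ha : a ∈ E)
    (hs : a + b + c ∈ E) (hu : masudaRatio a b c ∈ E) (hv : masudaRatio b a c ∈ E) : b ∈ E := by
  have he₂ : a * b + a * c + b * c ∈ E := by
    rw [esymm_two_eq_of_masudaRatio h]
    apply_rules [add_mem, sub_mem, mul_mem, pow_mem, ofNat_mem]
  have he₃ : a * b * c ∈ E := by
    rw [esymm_three_eq_of_masudaRatio h]
    apply_rules [sub_mem, mul_mem, pow_mem]
  have hcyc : a ^ 2 * b + b ^ 2 * c + c ^ 2 * a ∈ E := by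
    have : a ^ 2 * b + b ^ 2 * c + c ^ 2 * a = masudaRatio a b c
        * ((a + b + c) ^ 2 - 3 * (a * b + a * c + b * c)) + 3 * (a * b * c) := by
      have hD : (a + b + c) ^ 2 - 3 * (a * b + a * c + b * c) = masudaDenominator a b c := by
        unfold masudaDenominator
        ring
      rw [hD, masudaRatio_mul_masudaDenominator h]
      ring
    rw [this]
    apply_rules [add_mem, sub_mem, mul_mem, pow_mem, ofNat_mem]
  have hsum : b + c ∈ E := by
    convert sub_mem hs ha using 1
    ring
  have hprod : b * c ∈ E := by
    convert sub_mem he₂ (mul_mem ha hsum) using 1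
    ring
  have hb : b = (a ^ 2 * b + b ^ 2 * c + c ^ 2 * a - a * (b + c) ^ 2 + a * (b * c))
      / (a ^ 2 + b * c - a * (b + c)) := by
    have hden : a ^ 2 + b * c - a * (b + c) = (a - b) * (a - c) := by ring
    rw [hden, eq_div_iff (mul_ne_zero (sub_ne_zero.2 hab) (sub_ne_zero.2 hac))]
    ring
  rw [hb]
  apply_rules [div_mem, add_mem, sub_mem, mul_mem, pow_mem]

/-- The sum and the two Masuda ratios of three elements, which generate the fixed field of the
cyclic permutations of three variables. -/
def masudaInvariants (q : Fin 3 → L) : Fin 3 → L :=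
  ![q 0 + q 1 + q 2, masudaRatio (q 0) (q 1) (q 2), masudaRatio (q 1) (q 0) (q 2)]

lemma comp_masudaInvariants {M F : Type*} [Field M] [FunLike F L M] [RingHomClass F L M] (f : F)
    (q : Fin 3 → L) : f ∘ masudaInvariants q = masudaInvariants (f ∘ q) := by
  funext i
  fin_cases i <;> simp [masudaInvariants, map_masudaRatio]

lemma masudaInvariants_comp_rotate (q : Fin 3 → L) :
    masudaInvariants (q ∘ ![1, 2, 0]) = masudaInvariants q := by
  funext i
  fin_cases i
  · exact (add_rotate (q 0) (q 1) (q 2)).symm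
  · exact masudaRatio_rotate (q 0) (q 1) (q 2)
  · exact (masudaRatio_rotate (q 2) (q 1) (q 0)).symm

lemma masudaInvariants_comp_swap (q : Fin 3 → L) :
    masudaInvariants (q ∘ ![0, 2, 1]) = masudaInvariants q ∘ ![0, 2, 1] := by
  funext i
  fin_cases i
  · exact add_right_comm (q 0) (q 2) (q 1)
  · exact masudaRatio_rotate (q 1) (q 0) (q 2)
  · exact (masudaRatio_rotate (q 2) (q 0) (q 1)).symm

lemma mem_of_masudaInvariants_mem {S : Type*} [SetLike S L] [SubfieldClass S L] {E : S}
    {q : Fin 3 → L} (hq : Function.Injective q) (h : masudaDenominator (q 0) (q 1) (q 2) ≠ 0)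
    (h₀ : q 0 ∈ E) (hw : ∀ i, masudaInvariants q i ∈ E) (i : Fin 3) : q i ∈ E := by
  have hs : q 0 + q 1 + q 2 ∈ E := hw 0
  have m₁ : q 1 ∈ E := mem_of_masudaRatio_mem h (hq.ne (by decide)) (hq.ne (by decide)) h₀ hs
    (hw 1) (hw 2)
  have m₂ : q 2 ∈ E := by
    rw [← add_sub_cancel_left (q 0 + q 1) (q 2)]
    exact sub_mem hs (add_mem h₀ m₁)
  fin_cases i
  exacts [h₀, m₁, m₂]

/-- The cubic whose roots are three elements with the prescribed Masuda invariants `w`. -/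
def masudaCubic {R : Type*} [CommRing R] (w : Fin 3 → R) : R[X] :=
  X ^ 3 - C (w 0) * X ^ 2
    + C (w 0 * (w 1 + w 2) - 3 * (w 1 ^ 2 - w 1 * w 2 + w 2 ^ 2)) * X
    - C (w 0 * w 1 * w 2 - w 1 ^ 3 - w 2 ^ 3)

lemma monic_masudaCubic {R : Type*} [CommRing R] (w : Fin 3 → R) : (masudaCubic w).Monic := by
  nontriviality R
  unfold masudaCubic
  monicity!

lemma natDegree_masudaCubic {R : Type*} [CommRing R] [Nontrivial R] (w : Fin 3 → R) :
    (masudaCubic w).natDegree = 3 := by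
  unfold masudaCubic
  compute_degree!

lemma map_masudaCubic {R R' : Type*} [CommRing R] [CommRing R'] (f : R →+* R') (w : Fin 3 → R) :
    (masudaCubic w).map f = masudaCubic (f ∘ w) := by
  simp [masudaCubic, map_ofNat f]

lemma masudaCubic_masudaInvariants {q : Fin 3 → L}
    (h : masudaDenominator (q 0) (q 1) (q 2) ≠ 0) :
    masudaCubic (masudaInvariants q) = ∏ i, (X - C (q i)) := by
  simp only [masudaCubic, masudaInvariants, Matrix.cons_val]
  rw [← esymm_two_eq_of_masudaRatio h, ← esymm_three_eq_of_masudaRatio h, Fin.prod_univ_three]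
  simp only [map_add, map_mul]
  ring

theorem IsTranscendenceBasisOfDegreeLE.of_masudaInvariants {K ι : Type*} [Field K]
    [Algebra K L] [Finite ι] {t t' : ι → L} {d : ℕ} (h : IsTranscendenceBasisOfDegreeLE K t d)
    {p : Fin 3 → ι} (hp : Function.Injective p) (hoff : ∀ i ∉ Set.range p, t' i = t i)
    (ht' : t' ∘ p = masudaInvariants (t ∘ p)) :
    IsTranscendenceBasisOfDegreeLE K t' (3 * d) := by
  have hq : AlgebraicIndependent K (t ∘ p) := h.algebraicIndependent.comp p hp
  have hD : masudaDenominator ((t ∘ p) 0) ((t ∘ p) 1) ((t ∘ p) 2) ≠ 0 := by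
    have hne := aeval_ne_of_eval_ne hq (x := ![1, 0, 0]) (g := 0)
      (f := .X 0 ^ 2 + .X 1 ^ 2 + .X 2 ^ 2 - .X 0 * .X 1 - .X 1 * .X 2 - .X 2 * .X 0) (by simp)
    simp only [map_sub, map_add, map_mul, map_pow, MvPolynomial.aeval_X, map_zero] at hne
    exact hne
  let w (i : Fin 3) : adjoin K (Set.range t') := ⟨t' (p i), subset_adjoin K _ ⟨p i, rfl⟩⟩
  have hw : algebraMap (adjoin K (Set.range t')) L ∘ w = masudaInvariants (t ∘ p) := ht'
  have hroot : aeval (t (p 0)) (masudaCubic w) = 0 := by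
    rw [aeval_def, ← eval_map, map_masudaCubic, hw, masudaCubic_masudaInvariants hD]
    simp [Fin.prod_univ_three]
  have hmem (i : Fin 3) : masudaInvariants (t ∘ p) i ∈ (adjoin K (Set.range t'))⟮t (p 0)⟯ :=
    hw ▸ IntermediateField.algebraMap_mem _ (w i)
  rw [← natDegree_masudaCubic w]
  exact h.of_replace_root hoff (monic_masudaCubic w) hroot <|
    mem_of_masudaInvariants_mem hq.injective hD (mem_adjoin_simple_self _ _) hmem

end Masuda

section Invariants

variable {L : Type*} [Field L]

/-- Generators of the fixed field of the alternating group on four variables: the sum, followed by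
the Masuda invariants of the three Klein ratios, which the alternating group permutes cyclically. -/
def alternatingInvariants (q : Fin 4 → L) : Fin 4 → L :=
  Fin.cons (kleinInvariants q 0) (masudaInvariants (Fin.tail (kleinInvariants q)))

lemma comp_alternatingInvariants {M F : Type*} [Field M] [FunLike F L M] [RingHomClass F L M]
    (f : F) (q : Fin 4 → L) : f ∘ alternatingInvariants q = alternatingInvariants (f ∘ q) := by
  rw [alternatingInvariants, alternatingInvariants, Fin.comp_cons, comp_masudaInvariants,
    Fin.comp_tail, comp_kleinInvariants, ← comp_kleinInvariants f, Function.comp_apply]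

lemma alternatingInvariants_comp_swap_pairs (q : Fin 4 → L) :
    alternatingInvariants (q ∘ ![2, 3, 0, 1]) = alternatingInvariants q := by
  rw [alternatingInvariants, kleinInvariants_comp_swap_pairs, alternatingInvariants]

lemma alternatingInvariants_comp_rotate (q : Fin 4 → L) :
    alternatingInvariants (q ∘ ![0, 2, 3, 1]) = alternatingInvariants q := by
  have htail : Fin.tail (kleinInvariants q ∘ ![0, 2, 3, 1]) =
      Fin.tail (kleinInvariants q) ∘ ![1, 2, 0] := by
    funext i
    fin_cases i <;> rfl
  rw [alternatingInvariants, kleinInvariants_comp_rotate, htail, masudaInvariants_comp_rotate]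
  rfl

lemma alternatingInvariants_comp_swap (q : Fin 4 → L) :
    alternatingInvariants (q ∘ ![1, 0, 2, 3]) = alternatingInvariants q ∘ ![0, 1, 3, 2] := by
  have htail : Fin.tail (kleinInvariants q ∘ ![0, 1, 3, 2]) =
      Fin.tail (kleinInvariants q) ∘ ![0, 2, 1] := by
    funext i
    fin_cases i <;> rfl
  rw [alternatingInvariants, kleinInvariants_comp_swap, htail, masudaInvariants_comp_swap]
  funext i
  fin_cases i <;> rfl

theorem IsTranscendenceBasisOfDegreeLE.of_alternatingInvariants {K ι : Type*} [Field K]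
    [Algebra K L] [Finite ι] {t t' : ι → L} {d : ℕ} (h : IsTranscendenceBasisOfDegreeLE K t d)
    {p : Fin 4 → ι} (hp : Function.Injective p) (hoff : ∀ i ∉ Set.range p, t' i = t i)
    (ht' : t' ∘ p = alternatingInvariants (t ∘ p)) :
    IsTranscendenceBasisOfDegreeLE K t' (12 * d) := by
  let r := Function.extend p (kleinInvariants (t ∘ p)) t
  have hrp : r ∘ p = kleinInvariants (t ∘ p) := Function.extend_comp hp _ _
  have hr (i : ι) (hi : i ∉ Set.range p) : r i = t i := Function.extend_apply' _ _ _ hi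
  have hrd : IsTranscendenceBasisOfDegreeLE K r (4 * d) := h.of_kleinInvariants hp hr hrp
  rw [show 12 * d = 3 * (4 * d) by ring]
  refine hrd.of_masudaInvariants (hp.comp (Fin.succ_injective 3)) (fun i hi ↦ ?_) ?_
  · by_cases hip : i ∈ Set.range p
    · obtain ⟨j, rfl⟩ := hip
      obtain rfl : j = 0 := by
        by_contra hj
        exact hi ⟨j.pred hj, congrArg p (j.succ_pred hj)⟩
      exact (congrFun ht' 0).trans (congrFun hrp 0).symm
    · rw [hoff i hip, hr i hip]
  · rw [← Function.comp_assoc, ← Function.comp_assoc, hrp, ht']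
    rfl

/-- Generators of the fixed field of the Klein four-group acting on `y, z` by interchanging `y`
with `z` and by interchanging the entries `2, 3` of both: the Klein invariants of the entries
`2, 3`, on which the action is regular, and combinations of the remaining entries whose coefficients
separate `y` from `z`. The order is the one in which they replace `y` and `z` below. -/
def twoBlockInvariants (y z : Fin 4 → L) : Fin 8 → L :=
  ![y 0 + z 0, y 1 + z 1, kleinInvariants ![y 2, y 3, z 2, z 3] 0,
    kleinInvariants ![y 2, y 3, z 2, z 3] 1, (y 2 + y 3) * y 0 + (z 2 + z 3) * z 0,
    (y 2 + y 3) * y 1 + (z 2 + z 3) * z 1, kleinInvariants ![y 2, y 3, z 2, z 3] 2,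
    kleinInvariants ![y 2, y 3, z 2, z 3] 3]

lemma comp_twoBlockInvariants {M F : Type*} [Field M] [FunLike F L M] [RingHomClass F L M]
    (f : F) (y z : Fin 4 → L) :
    f ∘ twoBlockInvariants y z = twoBlockInvariants (f ∘ y) (f ∘ z) := by
  have hw : kleinInvariants ![f (y 2), f (y 3), f (z 2), f (z 3)] =
      f ∘ kleinInvariants ![y 2, y 3, z 2, z 3] := by
    rw [comp_kleinInvariants]
    congr 1
    funext i
    fin_cases i <;> rfl
  funext i
  fin_cases i <;> simp [twoBlockInvariants, hw]

lemma twoBlockInvariants_comm (y z : Fin 4 → L) :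
    twoBlockInvariants z y = twoBlockInvariants y z := by
  have hw : kleinInvariants ![z 2, z 3, y 2, y 3] = kleinInvariants ![y 2, y 3, z 2, z 3] := by
    rw [← kleinInvariants_comp_swap_pairs ![y 2, y 3, z 2, z 3]]
    congr 1
    funext i
    fin_cases i <;> rfl
  simp only [twoBlockInvariants, hw, add_comm]

lemma twoBlockInvariants_comp_swap (y z : Fin 4 → L) :
    twoBlockInvariants (y ∘ ![0, 1, 3, 2]) (z ∘ ![0, 1, 3, 2]) = twoBlockInvariants y z := by
  have hw : kleinInvariants ![y 3, y 2, z 3, z 2] = kleinInvariants ![y 2, y 3, z 2, z 3] := by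
    rw [← kleinInvariants_comp_swap_swap ![y 2, y 3, z 2, z 3]]
    congr 1
    funext i
    fin_cases i <;> rfl
  rw [twoBlockInvariants, twoBlockInvariants, ← hw, add_comm (y 2), add_comm (z 2)]
  rfl

theorem isTranscendenceBasisOfDegreeLE_twoBlockInvariants {K : Type*} [Field K]
    [Algebra K L] {y z : Fin 4 → L} {d : ℕ}
    (h : IsTranscendenceBasisOfDegreeLE K ![y 0, y 1, y 2, y 3, z 0, z 1, z 2, z 3] d) :
    IsTranscendenceBasisOfDegreeLE K (twoBlockInvariants y z) (4 * d) := by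
  let α := y 2 + y 3
  let β := z 2 + z 3
  let r := ![y 0 + z 0, y 1 + z 1, y 2, y 3, α * y 0 + β * z 0, α * y 1 + β * z 1, z 2, z 3]
  have hr (i : Fin 8) : r i ∈ adjoin K (Set.range r) := subset_adjoin K _ ⟨i, rfl⟩
  have hrd : IsTranscendenceBasisOfDegreeLE K r d := by
    refine h.of_replace_linear (i := ![0, 1]) (j := ![4, 5]) (α := α) (β := β) ?_ ?_ ?_
      (add_mem (hr 2) (hr 3)) (add_mem (hr 6) (hr 7)) ?_
    · intro l hl
      rw [Set.mem_union, Set.mem_range, Set.mem_range] at hl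
      fin_cases l <;> first | exact absurd hl (by decide) | rfl
    · intro k
      fin_cases k <;> rfl
    · intro k
      fin_cases k <;> rfl
    · exact add_ne_add_of_algebraicIndependent h.algebraicIndependent (i := 2) (j := 3) (k := 6)
        (l := 7) (by decide) (by decide) (by decide)
  refine hrd.of_kleinInvariants (p := ![2, 3, 6, 7]) (by decide) ?_ ?_
  · intro l hl
    rw [Set.mem_range] at hl
    fin_cases l <;> first | exact absurd hl (by decide) | simp [twoBlockInvariants, r, α, β]
  · funext i
    fin_cases i <;> rfl

/-- Generators of the fixed field of `G₄₅`. -/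
def g45Invariants (x : Fin 8 → L) : Fin 8 → L :=
  twoBlockInvariants (alternatingInvariants (x ∘ ![0, 1, 2, 3]))
    (alternatingInvariants (x ∘ ![4, 5, 6, 7]))

lemma comp_g45Invariants {M F : Type*} [Field M] [FunLike F L M] [RingHomClass F L M]
    (f : F) (x : Fin 8 → L) : f ∘ g45Invariants x = g45Invariants (f ∘ x) := by
  rw [g45Invariants, comp_twoBlockInvariants, comp_alternatingInvariants,
    comp_alternatingInvariants]
  rfl

theorem isTranscendenceBasisOfDegreeLE_g45Invariants {K : Type*} [Field K]
    [Algebra K L] {x : Fin 8 → L} {d : ℕ} (h : IsTranscendenceBasisOfDegreeLE K x d) :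
    IsTranscendenceBasisOfDegreeLE K (g45Invariants x) (576 * d) := by
  let y := alternatingInvariants (x ∘ ![0, 1, 2, 3])
  let z := alternatingInvariants (x ∘ ![4, 5, 6, 7])
  have hy : IsTranscendenceBasisOfDegreeLE K ![y 0, y 1, y 2, y 3, x 4, x 5, x 6, x 7]
      (12 * d) := by
    refine h.of_alternatingInvariants (p := ![0, 1, 2, 3]) (by decide) ?_ ?_
    · intro l hl
      rw [Set.mem_range] at hl
      fin_cases l <;> first | exact absurd hl (by decide) | simp
    · funext i
      fin_cases i <;> rfl
  have hyz : IsTranscendenceBasisOfDegreeLE K ![y 0, y 1, y 2, y 3, z 0, z 1, z 2, z 3]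
      (12 * (12 * d)) := by
    refine hy.of_alternatingInvariants (p := ![4, 5, 6, 7]) (by decide) ?_ ?_
    · intro l hl
      rw [Set.mem_range] at hl
      fin_cases l <;> first | exact absurd hl (by decide) | simp
    · have hx : ![y 0, y 1, y 2, y 3, x 4, x 5, x 6, x 7] ∘ ![4, 5, 6, 7] = x ∘ ![4, 5, 6, 7] := by
        funext i
        fin_cases i <;> rfl
      rw [hx]
      funext i
      fin_cases i <;> rfl
  rw [show 576 * d = 4 * (12 * (12 * d)) by ring]
  exact isTranscendenceBasisOfDegreeLE_twoBlockInvariants hyz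

end Invariants

section FixedField

variable {K I : Type} [Field K]

lemma permHom_Xvar (σ : Equiv.Perm I) (i : I) : permHom K I σ (Xvar K I i) = Xvar K I (σ i) := by
  simp [permHom, Xvar, renameHom]

lemma algebraicIndependent_Xvar : AlgebraicIndependent K (Xvar K I) :=
  (MvPolynomial.algebraicIndependent_X I K).map'
    (f := IsScalarTower.toAlgHom K (MvPolynomial I K) (RFF K I)) (IsFractionRing.injective _ _)

lemma adjoin_range_Xvar : adjoin K (Set.range (Xvar K I)) = ⊤ := by
  have halg (p : MvPolynomial I K) :
      algebraMap _ (RFF K I) p ∈ adjoin K (Set.range (Xvar K I)) := by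
    have hp := MvPolynomial.aeval_algebraMap_apply (RFF K I) (MvPolynomial.X (R := K)) p
    rw [MvPolynomial.aeval_X_left_apply] at hp
    rw [← hp]
    exact algebra_adjoin_le_adjoin K _ ((MvPolynomial.aeval_range (R := K) _).le ⟨p, rfl⟩)
  rw [eq_top_iff]
  intro x _
  obtain ⟨p, q, -, rfl⟩ := IsFractionRing.div_surjective (A := MvPolynomial I K) x
  exact div_mem (halg p) (halg q)

lemma isTranscendenceBasisOfDegreeLE_Xvar : IsTranscendenceBasisOfDegreeLE K (Xvar K I) 1 := by
  have hrank : Module.finrank (adjoin K (Set.range (Xvar K I))) (RFF K I) = 1 := by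
    rw [adjoin_range_Xvar, IntermediateField.finrank_top]
  exact ⟨algebraicIndependent_Xvar, Module.finite_of_finrank_pos (hrank ▸ one_pos), hrank.le⟩

lemma permHom_injective : Function.Injective (permHom K I) := by
  intro σ τ h
  ext i
  apply (algebraicIndependent_Xvar (K := K)).injective
  rw [← permHom_Xvar, ← permHom_Xvar, h]

lemma finrank_fixedSub [Finite I] (G : Subgroup (Equiv.Perm I)) :
    Module.finrank (fixedSub K I G) (RFF K I) = Nat.card G := by
  let e := G.equivMapOfInjective _ (permHom_injective (K := K))
  have : Finite (G.map (permHom K I)) := .of_equiv _ e.toEquiv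
  have := Fintype.ofFinite (G.map (permHom K I))
  rw [Nat.card_congr e.toEquiv, Nat.card_eq_fintype_card]
  exact FixedPoints.finrank_eq_card (G.map (permHom K I)) (RFF K I)

lemma mem_fixedSub_closure {S : Set (Equiv.Perm I)} {x : RFF K I}
    (hx : ∀ σ ∈ S, permHom K I σ x = x) : x ∈ fixedSub K I (Subgroup.closure S) := by
  have hle : (Subgroup.closure S).map (permHom K I) ≤ MulAction.stabilizer _ x := by
    rw [Subgroup.map_le_iff_le_comap, Subgroup.closure_le]
    exact hx
  exact fun f ↦ hle f.2

lemma isRatExt_of_adjoin_eq {L : Type*} [Field L] [Algebra K L] [Finite I] {t : I → L}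
    {F : IntermediateField K L} (ht : AlgebraicIndependent K t)
    (hF : adjoin K (Set.range t) = F) : IsRatExt K F := by
  have hmem (i : I) : t i ∈ F := hF ▸ subset_adjoin K _ ⟨i, rfl⟩
  let e := (Finite.equivFin I).symm
  refine ⟨Nat.card I, fun i ↦ ⟨t (e i), hmem _⟩, ?_, ?_⟩
  · exact .of_comp F.val (ht.comp e e.injective)
  · apply lift_injective
    rw [lift_adjoin, lift_top, ← Set.range_comp]
    exact (congrArg (adjoin K) (e.surjective.range_comp t)).trans hF

theorem isRatExt_fixedSub [Finite I] {G : Subgroup (Equiv.Perm I)} {t : I → RFF K I} {d : ℕ}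
    (ht : IsTranscendenceBasisOfDegreeLE K t d) (hd : d ≤ Nat.card G)
    (hfix : ∀ i, t i ∈ fixedSub K I G) : IsRatExt K (fixedSub K I G) := by
  have := ht.finiteDimensional
  refine isRatExt_of_adjoin_eq ht.algebraicIndependent <| eq_of_le_of_finrank_le'
    (adjoin_le_iff.2 <| Set.range_subset_iff.2 hfix) <| ht.finrank_le.trans ?_
  rwa [finrank_fixedSub]

end FixedField

section GroupOrder

lemma card_mul_card_inf_stabilizer_le {G X : Type*} [Group G] [Finite G] [MulAction G X]
    (H : Subgroup G) (x : X) {n : ℕ} {g : Fin n → G} (hg : ∀ i, g i ∈ H)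
    (hinj : Function.Injective fun i ↦ g i • x) :
    n * Nat.card ↥(H ⊓ MulAction.stabilizer G x) ≤ Nat.card H := by
  let f : Fin n × ↥(H ⊓ MulAction.stabilizer G x) → H := fun z ↦
    ⟨g z.1 * z.2.1, H.mul_mem (hg z.1) z.2.2.1⟩
  have hf : Function.Injective f := by
    rintro ⟨i, a, ha⟩ ⟨j, b, hb⟩ hij
    have hmul : g i * a = g j * b := congrArg Subtype.val hij
    obtain rfl : i = j := hinj <| by
      simpa [mul_smul, MulAction.mem_stabilizer_iff.1 ha.2, MulAction.mem_stabilizer_iff.1 hb.2]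
        using congrArg (· • x) hmul
    simpa using hmul
  simpa using Nat.card_le_card_of_injective f hf

/-- The given generators `(1,3)(2,4)`, `(2,3,4)`, `(1,2)(5,6)`, `κ` of `G₄₅`, with the points
renumbered from `0`. -/
def g45Generator : Fin 4 → Equiv.Perm (Fin 8) :=
  ![Equiv.swap 0 2 * Equiv.swap 1 3, Equiv.swap 1 2 * Equiv.swap 2 3,
    Equiv.swap 0 1 * Equiv.swap 4 5,
    Equiv.swap 0 4 * Equiv.swap 1 5 * Equiv.swap 2 6 * Equiv.swap 3 7]

/-- The group `G₄₅`. -/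
def G45 : Subgroup (Equiv.Perm (Fin 8)) :=
  Subgroup.closure (Set.range g45Generator)

lemma G45_eq_closure :
    G45 = Subgroup.closure
      {Equiv.swap (0 : Fin 8) 2 * Equiv.swap 1 3,
       Equiv.swap (1 : Fin 8) 2 * Equiv.swap 2 3,
       Equiv.swap (0 : Fin 8) 1 * Equiv.swap 4 5,
       Equiv.swap (0 : Fin 8) 4 * Equiv.swap 1 5 * Equiv.swap 2 6 * Equiv.swap 3 7} := by
  simp only [G45, g45Generator, Matrix.range_cons, Matrix.range_empty, Set.union_empty,
    Set.singleton_union]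

/-- The element of `G₄₅` spelled by a word in the generators. -/
def g45Word (w : List (Fin 4)) : Equiv.Perm (Fin 8) :=
  (w.map g45Generator).prod

lemma g45Word_mem_G45 (w : List (Fin 4)) : g45Word w ∈ G45 :=
  G45.list_prod_mem <| List.forall_mem_map.2 fun i _ ↦ Subgroup.subset_closure ⟨i, rfl⟩

/-- The pointwise stabilizer in `G₄₅` of the listed points. -/
def g45Stabilizer (l : List (Fin 8)) : Subgroup (Equiv.Perm (Fin 8)) :=
  G45 ⊓ ⨅ i ∈ l, MulAction.stabilizer _ i

lemma card_mul_card_g45Stabilizer_le (l : List (Fin 8)) (j : Fin 8) {n : ℕ}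
    (w : Fin n → List (Fin 4)) (hw : ∀ k, ∀ i ∈ l, g45Word (w k) i = i)
    (hinj : Function.Injective fun k ↦ g45Word (w k) j) :
    n * Nat.card (g45Stabilizer (l ++ [j])) ≤ Nat.card (g45Stabilizer l) := by
  have hl : g45Stabilizer (l ++ [j]) = g45Stabilizer l ⊓ MulAction.stabilizer _ j := by
    simp [g45Stabilizer, iInf_or, iInf_inf_eq, inf_assoc]
  rw [hl]
  refine card_mul_card_inf_stabilizer_le _ j (fun k ↦ ⟨g45Word_mem_G45 (w k), ?_⟩) hinj
  simpa [Subgroup.mem_iInf] using hw k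

set_option maxRecDepth 4000 in
lemma le_card_G45 : 576 ≤ Nat.card G45 := by
  have h₁ := card_mul_card_g45Stabilizer_le [] 0
    ![[], [0], [1, 0], [1, 1, 0], [3], [3, 0], [3, 1, 0], [3, 1, 1, 0]] (by decide) (by decide)
  have h₂ := card_mul_card_g45Stabilizer_le [0] 1 ![[], [1], [1, 1]] (by decide) (by decide)
  have h₃ := card_mul_card_g45Stabilizer_le [0, 1] 4
    ![[], [3, 0, 3], [3, 1, 0, 3], [3, 1, 1, 0, 3]] (by decide) (by decide)
  have h₄ := card_mul_card_g45Stabilizer_le [0, 1, 4] 5 ![[], [3, 1, 3], [3, 1, 1, 3]]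
    (by decide) (by decide)
  have h₅ := card_mul_card_g45Stabilizer_le [0, 1, 4, 5] 2 ![[], [0, 3, 0, 3, 2, 0, 3, 0, 3]]
    (by decide) (by decide)
  have h₆ : 0 < Nat.card (g45Stabilizer [0, 1, 4, 5, 2]) := Nat.card_pos
  have h₀ : g45Stabilizer [] = G45 := by simp [g45Stabilizer]
  simp only [List.nil_append, List.cons_append, h₀] at h₁ h₂ h₃ h₄ h₅
  omega

end GroupOrder

lemma g45Invariants_comp_g45Generator {L : Type*} [Field L] (x : Fin 8 → L) (k : Fin 4) :
    g45Invariants (x ∘ g45Generator k) = g45Invariants x := by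
  have hcomp {p q : Fin 4 → Fin 8} (h : g45Generator k ∘ p = q) :
      (x ∘ g45Generator k) ∘ p = x ∘ q := congrArg (x ∘ ·) h
  fin_cases k
  · rw [g45Invariants, hcomp (q := ![0, 1, 2, 3] ∘ ![2, 3, 0, 1]) (by decide),
      hcomp (q := ![4, 5, 6, 7]) (by decide), ← Function.comp_assoc,
      alternatingInvariants_comp_swap_pairs, g45Invariants]
  · rw [g45Invariants, hcomp (q := ![0, 1, 2, 3] ∘ ![0, 2, 3, 1]) (by decide),
      hcomp (q := ![4, 5, 6, 7]) (by decide), ← Function.comp_assoc,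
      alternatingInvariants_comp_rotate, g45Invariants]
  · rw [g45Invariants, hcomp (q := ![0, 1, 2, 3] ∘ ![1, 0, 2, 3]) (by decide),
      hcomp (q := ![4, 5, 6, 7] ∘ ![1, 0, 2, 3]) (by decide), ← Function.comp_assoc,
      ← Function.comp_assoc, alternatingInvariants_comp_swap, alternatingInvariants_comp_swap,
      twoBlockInvariants_comp_swap, g45Invariants]
  · rw [g45Invariants, hcomp (q := ![4, 5, 6, 7]) (by decide),
      hcomp (q := ![0, 1, 2, 3]) (by decide), twoBlockInvariants_comm, g45Invariants]

lemma g45Invariants_Xvar_mem_fixedSub {K : Type} [Field K] (i : Fin 8) :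
    g45Invariants (Xvar K (Fin 8)) i ∈ fixedSub K (Fin 8) G45 := by
  apply mem_fixedSub_closure
  rintro _ ⟨k, rfl⟩
  have hX : permHom K (Fin 8) (g45Generator k) ∘ Xvar K (Fin 8) =
      Xvar K (Fin 8) ∘ g45Generator k := funext (permHom_Xvar _)
  exact congrFun ((comp_g45Invariants _ _).trans
    (hX ▸ g45Invariants_comp_g45Generator _ k)) i

/-- **Rationality for `G₄₅`.** For any field `K`, the subgroup `G₄₅ ⊆ S₈` of order 576 generated by `(1,3)(2,4)`, `(2,3,4)`, `(1,2)(5,6)` and `κ = (1,5)(2,6)(3,7)(4,8)` has `K`-rational fixed field. -/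
theorem rationality_G45 (K : Type) [Field K] :
    IsRatExt K ↥(fixedSub K (Fin 8) (Subgroup.closure
      {Equiv.swap (0 : Fin 8) 2 * Equiv.swap 1 3,
       Equiv.swap (1 : Fin 8) 2 * Equiv.swap 2 3,
       Equiv.swap (0 : Fin 8) 1 * Equiv.swap 4 5,
       Equiv.swap (0 : Fin 8) 4 * Equiv.swap 1 5 * Equiv.swap 2 6 * Equiv.swap 3 7})) := by
  rw [← G45_eq_closure]
  exact isRatExt_fixedSub
    (isTranscendenceBasisOfDegreeLE_g45Invariants isTranscendenceBasisOfDegreeLE_Xvar)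
    le_card_G45 g45Invariants_Xvar_mem_fixedSub
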